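/- Any deterministic streaming algorithm (modeled as an oblivious leveled read-once branching program with access to the current time index) that outputs a (1+ε)-multiplicative approximation to the number of ones in a length-n stream of bits, for a fixed constant ε > 0, must have at least Ω(n^{1/3}) states at some level, and hence uses Ω(log n) bits of memory. -/

import Mathlib

/-- The state reached by a leveled (time-aware) width-`w` read-once branching
program after reading the first `t` bits of the stream `b`. -/
def runChain {M : Type} (next : ℕ → M → Bool → M) (start : M) (b : ℕ → Bool) : ℕ → M
  | 0 => start
  | t + 1 => next t (runChain next start b t) (b t)

/-- number of ones among the first `t` bits -/
def onesCount (b : ℕ → Bool) (t : ℕ) : ℕ := ((Finset.range t).filter fun i => b i).card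

lemma onesCount_succ (b : ℕ → Bool) (t : ℕ) :
    onesCount b (t + 1) = onesCount b t + (if b t then 1 else 0) := by
  unfold onesCount
  rw [Finset.range_add_one, Finset.filter_insert]
  split_ifs with h <;> simp

lemma onesCount_congr (b b' : ℕ → Bool) (t : ℕ) (h : ∀ i < t, b i = b' i) :
    onesCount b t = onesCount b' t := by
  induction t with
  | zero => rfl
  | succ t ih =>
    rw [onesCount_succ, onesCount_succ, ih (fun i hi => h i (by omega)), h t (by omega)]

lemma onesCount_le (b : ℕ → Bool) (t : ℕ) : onesCount b t ≤ t := by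
  unfold onesCount
  exact (Finset.card_filter_le _ _).trans (by simp)

lemma runChain_congr {M : Type} (next : ℕ → M → Bool → M) (start : M) (b b' : ℕ → Bool) (t : ℕ)
    (h : ∀ i < t, b i = b' i) : runChain next start b t = runChain next start b' t := by
  induction t with
  | zero => rfl
  | succ t ih =>
    simp only [runChain]
    rw [ih (fun i hi => h i (by omega)), h t (by omega)]

lemma upd_agree (b : ℕ → Bool) (t : ℕ) (x : Bool) : ∀ i < t, Function.update b t x i = b i := by
  intro i hi
  rw [Function.update_of_ne (by omega)]

lemma onesCount_upd (b : ℕ → Bool) (t : ℕ) (x : Bool) :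
    onesCount (Function.update b t x) (t + 1) = onesCount b t + (if x then 1 else 0) := by
  rw [onesCount_succ, onesCount_congr _ _ t (upd_agree b t x), Function.update_self]

lemma runChain_upd {M : Type} (next : ℕ → M → Bool → M) (start : M) (b : ℕ → Bool) (t : ℕ)
    (x : Bool) : runChain next start (Function.update b t x) (t + 1)
      = next t (runChain next start b t) x := by
  simp only [runChain]
  rw [runChain_congr next start _ _ t (upd_agree b t x), Function.update_self]

/-- counts sharing a state with some count at most `k` -/
def reachSet {M : Type} (next : ℕ → M → Bool → M) (start : M) (t k : ℕ) : Set ℕ :=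
  {m | ∃ b b' : ℕ → Bool, runChain next start b t = runChain next start b' t ∧
    onesCount b' t ≤ k ∧ onesCount b t = m}

/-- largest right endpoint among state intervals with left endpoint at most `k` -/
noncomputable def maxEnd {M : Type} (next : ℕ → M → Bool → M) (start : M) (t k : ℕ) : ℕ :=
  sSup (reachSet next start t k)

section
variable {M : Type} (next : ℕ → M → Bool → M) (start : M)

lemma reachSet_bdd (t k : ℕ) : BddAbove (reachSet next start t k) := by
  refine ⟨t, ?_⟩
  rintro m ⟨b, b', -, -, rfl⟩
  exact onesCount_le b t

lemma reachSet_nonempty (t k : ℕ) : (reachSet next start t k).Nonempty :=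
  ⟨_, fun _ => false, fun _ => false, rfl, by simp [onesCount], rfl⟩

lemma maxEnd_mem (t k : ℕ) : maxEnd next start t k ∈ reachSet next start t k :=
  Nat.sSup_mem (reachSet_nonempty next start t k) (reachSet_bdd next start t k)

lemma le_maxEnd {t k m : ℕ} (h : m ∈ reachSet next start t k) : m ≤ maxEnd next start t k :=
  le_csSup (reachSet_bdd next start t k) h

lemma maxEnd_zero (t k : ℕ) : maxEnd next start t k ≤ maxEnd next start (t + 1) k := by
  obtain ⟨b, b', h, hk, hm⟩ := maxEnd_mem next start t k
  apply le_maxEnd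
  refine ⟨Function.update b t false, Function.update b' t false, ?_, ?_, ?_⟩
  · rw [runChain_upd, runChain_upd, h]
  · rw [onesCount_upd]; simpa using hk
  · rw [onesCount_upd]; simpa using hm

lemma maxEnd_one (t k : ℕ) : maxEnd next start t k + 1 ≤ maxEnd next start (t + 1) (k + 1) := by
  obtain ⟨b, b', h, hk, hm⟩ := maxEnd_mem next start t k
  apply le_maxEnd
  refine ⟨Function.update b t true, Function.update b' t true, ?_, ?_, ?_⟩
  · rw [runChain_upd, runChain_upd, h]
  · rw [onesCount_upd]; simpa using hk
  · rw [onesCount_upd]; simpa using hm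

end

lemma exists_change {w : ℕ} (next : ℕ → Fin w → Bool → Fin w) (start : Fin w) (t : ℕ) :
    ∃ k ∈ Finset.range (w + 1), maxEnd next start t k < maxEnd next start (t + 1) k := by
  by_contra! hcon
  have hstep : ∀ k, k < w → maxEnd next start t k < maxEnd next start t (k + 1) := by
    intro k hk
    have h1 := maxEnd_one next start t k
    have h2 := hcon (k + 1) (by simp; omega)
    omega
  have hmono : ∀ d k, k + d + 1 ≤ w →
      maxEnd next start t k < maxEnd next start t (k + d + 1) := by
    intro d
    induction d with
    | zero => intro k hk; exact hstep k (by omega)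
    | succ d ih =>
      intro k hk
      exact (ih k (by omega)).trans (hstep (k + d + 1) (by omega))
  choose b b' h hk hm using fun k => maxEnd_mem next start t k
  have hinj : Function.Injective
      (fun k : Fin (w + 1) => runChain next start (b k) t) := by
    have key : ∀ i j : Fin (w + 1), i < j →
        runChain next start (b i) t ≠ runChain next start (b j) t := by
      intro i j hij heq
      have h1 : maxEnd next start t j ≤ maxEnd next start t i :=
        le_maxEnd next start ⟨b j, b' i, by rw [← heq, h], hk i, hm j⟩
      have hij' : (i : ℕ) < j := hij
      have h2 := hmono ((j : ℕ) - i - 1) i (by omega)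
      rw [show (i : ℕ) + ((j : ℕ) - i - 1) + 1 = j by omega] at h2
      omega
    intro i j hij
    rcases lt_trichotomy i j with hlt | heq | hgt
    · exact absurd hij (key i j hlt)
    · exact heq
    · exact absurd hij.symm (key j i hgt)
  have := Fintype.card_le_of_injective _ hinj
  simp at this

lemma le_potential {w : ℕ} (next : ℕ → Fin w → Bool → Fin w) (start : Fin w) (t : ℕ) :
    t ≤ ∑ k ∈ Finset.range (w + 1), maxEnd next start t k := by
  induction t with
  | zero => exact Nat.zero_le _
  | succ t ih =>
    have : ∑ k ∈ Finset.range (w + 1), maxEnd next start t k <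
        ∑ k ∈ Finset.range (w + 1), maxEnd next start (t + 1) k :=
      Finset.sum_lt_sum (fun k _ => maxEnd_zero next start t k) (exists_change next start t)
    omega

/-- Any deterministic streaming algorithm, modeled as an oblivious
leveled read-once branching program of width `w` with access to the current time
index, that at every time `t ≤ n` outputs a `(1+ε)`-multiplicative approximation
to the number of ones seen so far, must satisfy `w = Ω(n^{1/3})`; hence its
memory `s` (with `w = 2^s`) is `Ω(log n)`. -/
theorem stmt_7 (ε : ℝ) (hε : 0 < ε) :
    ∃ c : ℝ, 0 < c ∧
      ∀ (n w : ℕ), 1 ≤ n →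
        ∀ (next : ℕ → Fin w → Bool → Fin w) (start : Fin w) (out : ℕ → Fin w → ℕ),
          (∀ (b : ℕ → Bool) (t : ℕ), t ≤ n →
            ((out t (runChain next start b t) : ℝ) ≤
              (1 + ε) * (((Finset.range t).filter fun i => b i).card : ℝ) ∧
             ((((Finset.range t).filter fun i => b i).card : ℝ) ≤
              (1 + ε) * (out t (runChain next start b t) : ℝ)))) →
          c * (n : ℝ) ^ ((1 : ℝ) / 3) ≤ (w : ℝ) ∧
            ∀ s : ℕ, w = 2 ^ s → c * Real.log n ≤ (s : ℝ) := by
  have hA : (1 : ℝ) ≤ (1 + ε) ^ 2 := by nlinarith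
  obtain ⟨B, hB⟩ : ∃ B : ℝ, B = 2 * (1 + ε) ^ 2 := ⟨_, rfl⟩
  have hB2 : 2 ≤ B := by linarith
  refine ⟨1 / (B + 2), by positivity, ?_⟩
  intro n w hn next start out hcorr
  have hc : ∀ (b : ℕ → Bool) (t : ℕ), t ≤ n →
      (out t (runChain next start b t) : ℝ) ≤ (1 + ε) * (onesCount b t : ℝ) ∧
      (onesCount b t : ℝ) ≤ (1 + ε) * (out t (runChain next start b t) : ℝ) := hcorr
  have hw1 : 1 ≤ w := Nat.one_le_iff_ne_zero.mpr (fun h => by subst h; exact start.elim0)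
  have hw1' : (1 : ℝ) ≤ w := by exact_mod_cast hw1
  have hn1 : (1 : ℝ) ≤ n := by exact_mod_cast hn
  have hend : ∀ k, (maxEnd next start n k : ℝ) ≤ (1 + ε) ^ 2 * k := by
    intro k
    obtain ⟨b, b', h, hk, hm⟩ := maxEnd_mem next start n k
    rw [← hm]
    have h1 := (hc b n le_rfl).2
    have h2 := (hc b' n le_rfl).1
    rw [h] at h1
    have hk' : (onesCount b' n : ℝ) ≤ k := by exact_mod_cast hk
    calc (onesCount b n : ℝ) ≤ _ := h1
      _ ≤ (1 + ε) * ((1 + ε) * k) := by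
        have : (1 + ε) * (onesCount b' n : ℝ) ≤ (1 + ε) * k := by gcongr
        gcongr
        linarith
      _ = _ := by ring
  have hnB : (n : ℝ) ≤ B * (w : ℝ) ^ 2 := by
    have h1 : (n : ℝ) ≤ ∑ k ∈ Finset.range (w + 1), (maxEnd next start n k : ℝ) := by
      exact_mod_cast le_potential next start n
    have h2 : ∑ k ∈ Finset.range (w + 1), (maxEnd next start n k : ℝ) ≤
        ∑ k ∈ Finset.range (w + 1), (1 + ε) ^ 2 * (w : ℝ) := by
      refine Finset.sum_le_sum fun k hk => (hend k).trans ?_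
      have : (k : ℝ) ≤ w := by
        have := Finset.mem_range.mp hk
        exact_mod_cast (by omega : k ≤ w)
      gcongr
    rw [Finset.sum_const, Finset.card_range, nsmul_eq_mul] at h2
    push_cast at h2
    have h3 : ((w : ℝ) + 1) * ((1 + ε) ^ 2 * w) ≤ (2 * w) * ((1 + ε) ^ 2 * w) := by
      gcongr
      linarith
    rw [hB]
    nlinarith
  have hw2 : w ≠ 1 := by
    intro h
    subst h
    have h1 := (hc (fun _ => true) 1 hn).2
    have h2 := (hc (fun _ => false) 1 hn).1
    rw [Subsingleton.elim (runChain next start (fun _ => true) 1)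
      (runChain next start (fun _ => false) 1)] at h1
    have e1 : onesCount (fun _ => true) 1 = 1 := by simp [onesCount]
    have e2 : onesCount (fun _ => false) 1 = 0 := by simp [onesCount]
    rw [e1] at h1
    rw [e2] at h2
    push_cast at h1 h2
    nlinarith
  constructor
  · have h3 : (n : ℝ) ≤ (B * w) ^ 3 := by
      refine hnB.trans ?_
      have hBB : B ≤ B ^ 3 := le_self_pow₀ (by linarith) (by norm_num)
      have hww : (w : ℝ) ^ 2 ≤ (w : ℝ) ^ 3 := pow_le_pow_right₀ hw1' (by norm_num)
      rw [mul_pow]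
      gcongr
    have h4 : (n : ℝ) ^ ((1 : ℝ) / 3) ≤ B * w := by
      calc (n : ℝ) ^ ((1 : ℝ) / 3) ≤ ((B * w) ^ 3) ^ ((1 : ℝ) / 3) := by gcongr
        _ = B * w := by
          rw [← Real.rpow_natCast, ← Real.rpow_mul (by positivity)]
          norm_num
    rw [div_mul_eq_mul_div, one_mul, div_le_iff₀ (by positivity)]
    nlinarith
  · intro s hs
    have hs1 : 1 ≤ s := Nat.one_le_iff_ne_zero.mpr (fun h => hw2 (by rw [hs, h, pow_zero]))
    have hs1' : (1 : ℝ) ≤ s := by exact_mod_cast hs1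
    have h5 : Real.log n ≤ Real.log B + 2 * (s * Real.log 2) := by
      have := Real.log_le_log (by positivity) hnB
      rw [Real.log_mul (by positivity) (by positivity), Real.log_pow, hs] at this
      push_cast at this
      rwa [Real.log_pow] at this
    have h6 : Real.log B ≤ B := Real.log_le_self (by linarith)
    have h7 : Real.log 2 ≤ 1 := by linarith [Real.log_two_lt_d9]
    have h8 : (s : ℝ) * Real.log 2 ≤ s := mul_le_of_le_one_right (by positivity) h7
    rw [div_mul_eq_mul_div, one_mul, div_le_iff₀ (by positivity)]
    nlinarith
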